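/- arXiv:1305.5569 — 2 statements merged into one kernel-verified Lean document; each statement's English description precedes it below -/
import Mathlib

section
/- Fix a permutation σ. Let P(n) be the probability that for a uniformly random permutation τ of length n, the interval [σ,τ] in the pattern poset contains a subinterval [σ',τ'] with |τ'| − |σ'| ≥ 3 whose open interval (σ',τ') is disconnected. Then P(n) → 1 as n → ∞. -/
open scoped Classical

/-- The set of all (finite) permutations, as patterns: a permutation of length `n`
together with its length. -/
abbrev PermPt := Σ n : ℕ, Equiv.Perm (Fin n)

/-- Pattern containment order: `σ` occurs in `τ` if there is a strictly monotone
choice of positions on which `τ` is order-isomorphic to `σ`. -/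
def ple (σ τ : PermPt) : Prop :=
  ∃ f : Fin σ.1 → Fin τ.1, StrictMono f ∧
    ∀ a b : Fin σ.1, σ.2 a ≤ σ.2 b ↔ τ.2 (f a) ≤ τ.2 (f b)

/-- Strict pattern containment. -/
def plt (σ τ : PermPt) : Prop := ple σ τ ∧ ¬ ple τ σ

/-- Direct sum of permutations. -/
def pds {m n : ℕ} (α : Equiv.Perm (Fin m)) (β : Equiv.Perm (Fin n)) :
    Equiv.Perm (Fin (m + n)) :=
  finSumFinEquiv.symm.trans ((Equiv.sumCongr α β).trans finSumFinEquiv)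

/-- Skew sum of permutations. -/
def pss {m n : ℕ} (α : Equiv.Perm (Fin m)) (β : Equiv.Perm (Fin n)) :
    Equiv.Perm (Fin (m + n)) :=
  finSumFinEquiv.symm.trans
    (((Equiv.sumCongr α β).trans (Equiv.sumComm (Fin m) (Fin n))).trans
      (finSumFinEquiv.trans (finCongr (Nat.add_comm n m))))

/-- Direct sum, as an operation on `PermPt`. -/
def pdsP (a b : PermPt) : PermPt := ⟨a.1 + b.1, pds a.2 b.2⟩

/-- Skew sum, as an operation on `PermPt`. -/
def pssP (a b : PermPt) : PermPt := ⟨a.1 + b.1, pss a.2 b.2⟩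

/-- The empty permutation. -/
def pempty : PermPt := ⟨0, 1⟩

/-- The permutation `1` of length one. -/
def pone : PermPt := ⟨1, 1⟩

/-- A permutation is decomposable if it is the direct sum of two nonempty
permutations, i.e. some proper nonempty initial segment of positions is mapped
to the corresponding initial segment of values. -/
def Decomp {n : ℕ} (σ : Equiv.Perm (Fin n)) : Prop :=
  ∃ m : ℕ, 0 < m ∧ m < n ∧ ∀ i : Fin n, (i : ℕ) < m → (σ i : ℕ) < m

/-- Disconnectedness of a set of permutations under pattern containment:
it splits into two nonempty parts with no comparabilities between them. -/
def Disconn (S : Set PermPt) : Prop :=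
  ∃ A B : Set PermPt, A ∪ B = S ∧ A.Nonempty ∧ B.Nonempty ∧
    ∀ x ∈ A, ∀ y ∈ B, ¬ ple x y ∧ ¬ ple y x

/-- The interval `[σ,τ]` contains a non-trivial disconnected subinterval:
a subinterval `[σ',τ']` with `|τ'| − |σ'| ≥ 3` whose open interval is
disconnected. -/
def HasNTDisc (σ τ : PermPt) : Prop :=
  ∃ σ' τ' : PermPt, ple σ σ' ∧ ple σ' τ' ∧ ple τ' τ ∧ σ'.1 + 3 ≤ τ'.1 ∧
    Disconn {π | plt σ' π ∧ plt π τ'}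

/-!
If `s` is indecomposable of length at least two, every element of the open interval `(s, s ⊕ s)`
contains exactly one of `s ⊕ 1` and `1 ⊕ s`: an occurrence of `s` in `s ⊕ s` lies inside one of the
two summands, and an element containing both `s ⊕ 1` and `1 ⊕ s` would contain `s ⊕ s`. As these two
conditions are closed upwards, the interval is disconnected. Every `σ` is contained in an
indecomposable `s` of length at least three, so it suffices that a random permutation contains the
fixed pattern `s ⊕ s` with high probability. For this, cut `n` into blocks of length `l` and shuffle
each block uniformly: the shuffled permutation is again uniform, and each block independently
shows the pattern with probability `1 / l!`.
-/

section Occurrence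

/-- `f` lists the positions of an occurrence of `σ` in `τ`; these are the witnesses of `ple`. -/
structure IsOccurrence {m n : ℕ} (σ : Equiv.Perm (Fin m)) (τ : Equiv.Perm (Fin n))
    (f : Fin m → Fin n) : Prop where
  strictMono : StrictMono f
  le_iff_le : ∀ a b, σ a ≤ σ b ↔ τ (f a) ≤ τ (f b)

variable {l m n : ℕ} {ρ : Equiv.Perm (Fin l)} {σ : Equiv.Perm (Fin m)} {τ : Equiv.Perm (Fin n)}

lemma ple_iff_exists_isOccurrence {σ τ : PermPt} : ple σ τ ↔ ∃ f, IsOccurrence σ.2 τ.2 f :=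
  exists_congr fun _ => ⟨fun h => ⟨h.1, h.2⟩, fun h => ⟨h.1, h.2⟩⟩

namespace IsOccurrence

protected lemma ple {f : Fin m → Fin n} (hf : IsOccurrence σ τ f) : ple ⟨m, σ⟩ ⟨n, τ⟩ :=
  ple_iff_exists_isOccurrence.2 ⟨f, hf⟩

lemma lt_iff_lt {f : Fin m → Fin n} (hf : IsOccurrence σ τ f) (a b : Fin m) :
    σ a < σ b ↔ τ (f a) < τ (f b) :=
  lt_iff_lt_of_le_iff_le (hf.le_iff_le b a)

lemma of_lt_imp_lt {f : Fin m → Fin n} (hf : StrictMono f)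
    (h : ∀ a b, σ a < σ b → τ (f a) < τ (f b)) : IsOccurrence σ τ f := by
  have hmono : StrictMono (τ ∘ f ∘ σ.symm) := fun x y hxy => h _ _ (by simpa using hxy)
  exact ⟨hf, fun a b => by simpa using (hmono.le_iff_le (a := σ a) (b := σ b)).symm⟩

protected lemma id : IsOccurrence σ σ id :=
  ⟨strictMono_id, fun _ _ => Iff.rfl⟩

protected lemma comp {g : Fin m → Fin n} {f : Fin l → Fin m} (hg : IsOccurrence σ τ g)
    (hf : IsOccurrence ρ σ f) : IsOccurrence ρ τ (g ∘ f) :=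
  ⟨hg.strictMono.comp hf.strictMono,
    fun a b => (hf.le_iff_le a b).trans (hg.le_iff_le (f a) (f b))⟩

lemma of_comp {g : Fin m → Fin n} {f : Fin l → Fin m} (hg : IsOccurrence σ τ g)
    (hgf : IsOccurrence ρ τ (g ∘ f)) : IsOccurrence ρ σ f :=
  ⟨fun _ _ hab => hg.strictMono.lt_iff_lt.1 (hgf.strictMono hab),
    fun a b => (hgf.le_iff_le a b).trans (hg.le_iff_le (f a) (f b)).symm⟩

lemma one_const (τ : Equiv.Perm (Fin n)) (p : Fin n) :
    IsOccurrence (1 : Equiv.Perm (Fin 1)) τ fun _ => p :=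
  ⟨Subsingleton.strictMono _, fun a b => by simp only [Subsingleton.elim a b, le_refl]⟩

end IsOccurrence

lemma length_le_of_ple {σ τ : PermPt} (h : ple σ τ) : σ.1 ≤ τ.1 := by
  obtain ⟨f, hf, -⟩ := h
  simpa using Fintype.card_le_of_injective f hf.injective

lemma plt_of_ple_of_length_lt {σ τ : PermPt} (h : ple σ τ) (hlt : σ.1 < τ.1) : plt σ τ :=
  ⟨h, fun h' => hlt.not_ge (length_le_of_ple h')⟩

lemma ple_refl (σ : PermPt) : ple σ σ :=
  IsOccurrence.id.ple

lemma ple_trans {ρ σ τ : PermPt} (hρσ : ple ρ σ) (hστ : ple σ τ) : ple ρ τ := by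
  obtain ⟨f, hf⟩ := ple_iff_exists_isOccurrence.1 hρσ
  obtain ⟨g, hg⟩ := ple_iff_exists_isOccurrence.1 hστ
  exact (hg.comp hf).ple

end Occurrence

section Sums

variable {k l m n : ℕ}

lemma pds_castAdd (α : Equiv.Perm (Fin m)) (β : Equiv.Perm (Fin n)) (i : Fin m) :
    pds α β (Fin.castAdd n i) = Fin.castAdd n (α i) := by
  simp [pds]

lemma pds_natAdd (α : Equiv.Perm (Fin m)) (β : Equiv.Perm (Fin n)) (i : Fin n) :
    pds α β (Fin.natAdd m i) = Fin.natAdd m (β i) := by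
  simp [pds]

lemma val_pds_lt_iff (α : Equiv.Perm (Fin m)) (β : Equiv.Perm (Fin n)) (i : Fin (m + n)) :
    (pds α β i : ℕ) < m ↔ (i : ℕ) < m := by
  induction i using Fin.addCases with
  | left i => simp [pds_castAdd]
  | right i => simp [pds_natAdd]

lemma pds_lt_pds (α : Equiv.Perm (Fin m)) (β : Equiv.Perm (Fin n)) {i j : Fin (m + n)}
    (hi : (i : ℕ) < m) (hj : m ≤ j) : pds α β i < pds α β j :=
  Fin.lt_def.2 <| ((val_pds_lt_iff α β i).2 hi).trans_le <|
    not_lt.1 fun h => hj.not_gt ((val_pds_lt_iff α β j).1 h)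

lemma isOccurrence_pds_castAdd (α : Equiv.Perm (Fin m)) (β : Equiv.Perm (Fin n)) :
    IsOccurrence α (pds α β) (Fin.castAdd n) :=
  ⟨Fin.strictMono_castAdd n, fun a b => by
    rw [pds_castAdd, pds_castAdd, (Fin.strictMono_castAdd n).le_iff_le]⟩

lemma isOccurrence_pds_natAdd (α : Equiv.Perm (Fin m)) (β : Equiv.Perm (Fin n)) :
    IsOccurrence β (pds α β) (Fin.natAdd m) :=
  ⟨Fin.strictMono_natAdd m, fun a b => by simp [pds_natAdd]⟩

lemma val_pss_castAdd (α : Equiv.Perm (Fin m)) (β : Equiv.Perm (Fin n)) (i : Fin m) :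
    (pss α β (Fin.castAdd n i) : ℕ) = n + α i := by
  simp [pss, add_comm]

lemma val_pss_natAdd (α : Equiv.Perm (Fin m)) (β : Equiv.Perm (Fin n)) (i : Fin n) :
    (pss α β (Fin.natAdd m i) : ℕ) = β i := by
  simp [pss]

lemma isOccurrence_pss_castAdd (α : Equiv.Perm (Fin m)) (β : Equiv.Perm (Fin n)) :
    IsOccurrence α (pss α β) (Fin.castAdd n) :=
  ⟨Fin.strictMono_castAdd n, fun a b => by
    rw [Fin.le_def, Fin.le_def, val_pss_castAdd, val_pss_castAdd, Nat.add_le_add_iff_left]⟩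

lemma IsOccurrence.append {α : Equiv.Perm (Fin k)} {β : Equiv.Perm (Fin l)}
    {τ : Equiv.Perm (Fin n)} {c : Fin k → Fin n} {d : Fin l → Fin n}
    (hc : IsOccurrence α τ c) (hd : IsOccurrence β τ d) (hpos : ∀ i j, c i < d j)
    (hval : ∀ i j, τ (c i) < τ (d j)) : IsOccurrence (pds α β) τ (Fin.append c d) := by
  refine .of_lt_imp_lt (fun a b hab => ?_) fun a b hab => ?_
  · induction a using Fin.addCases with
    | left a => induction b using Fin.addCases with
      | left b => simpa using hc.strictMono ((Fin.strictMono_castAdd l).lt_iff_lt.1 hab)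
      | right b => simpa using hpos a b
    | right a => induction b using Fin.addCases with
      | left b => exact absurd hab (Fin.lt_def.2 (by simp; omega)).not_gt
      | right b => simpa using hd.strictMono ((Fin.strictMono_natAdd k).lt_iff_lt.1 hab)
  · induction a using Fin.addCases with
    | left a => induction b using Fin.addCases with
      | left b =>
        have hab' := ((isOccurrence_pds_castAdd α β).lt_iff_lt a b).2 hab
        simpa using (hc.lt_iff_lt a b).1 hab'
      | right b => simpa using hval a b
    | right a => induction b using Fin.addCases with
      | left b => exact absurd hab (pds_lt_pds α β (by simp) (by simp)).not_gt
      | right b =>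
        have hab' := ((isOccurrence_pds_natAdd α β).lt_iff_lt a b).2 hab
        simpa using (hd.lt_iff_lt a b).1 hab'

variable {p : ℕ} {α : Equiv.Perm (Fin m)} {β : Equiv.Perm (Fin n)} {π : Equiv.Perm (Fin p)}
  {f : Fin p → Fin (m + n)}

lemma IsOccurrence.ple_left_of_forall_lt (hf : IsOccurrence π (pds α β) f)
    (h : ∀ i, (f i : ℕ) < m) : ple ⟨p, π⟩ ⟨m, α⟩ :=
  ((isOccurrence_pds_castAdd α β).of_comp (f := fun i => ⟨f i, h i⟩) hf).ple

lemma IsOccurrence.ple_right_of_forall_le (hf : IsOccurrence π (pds α β) f)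
    (h : ∀ i, m ≤ (f i : ℕ)) : ple ⟨p, π⟩ ⟨n, β⟩ := by
  have hf' : Fin.natAdd m ∘ (fun i => ⟨f i - m, by have := h i; omega⟩) = f :=
    funext fun i => Fin.ext (Nat.add_sub_cancel' (h i))
  exact ((isOccurrence_pds_natAdd α β).of_comp (hf'.symm ▸ hf)).ple

lemma IsOccurrence.pds_ple_of_lt_of_le (hf : IsOccurrence π (pds α β) f) {γ : Equiv.Perm (Fin k)}
    {δ : Equiv.Perm (Fin l)} {c : Fin k → Fin p} {d : Fin l → Fin p} (hc : IsOccurrence γ π c)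
    (hd : IsOccurrence δ π d) (hcl : ∀ i, (f (c i) : ℕ) < m) (hdr : ∀ j, m ≤ (f (d j) : ℕ)) :
    ple ⟨k + l, pds γ δ⟩ ⟨p, π⟩ :=
  (hc.append hd
    (fun i j => hf.strictMono.lt_iff_lt.1 (Fin.lt_def.2 ((hcl i).trans_le (hdr j))))
    fun i j => (hf.lt_iff_lt _ _).2 (pds_lt_pds α β (hcl i) (hdr j))).ple

end Sums

section Indecomposable

variable {k m n p : ℕ}

lemma decomp_of_forall_lt {σ : Equiv.Perm (Fin n)} (p : Fin n) (hp : 0 < (p : ℕ))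
    (h : ∀ i j, i < p → p ≤ j → σ i < σ j) : Decomp σ := by
  refine ⟨p, hp, p.2, fun i hi => ?_⟩
  have hsub : (Finset.Ici p).map σ.toEmbedding ⊆ Finset.Ioi (σ i) := fun x hx => by
    obtain ⟨j, hj, rfl⟩ := Finset.mem_map.1 hx
    exact Finset.mem_Ioi.2 (h i j hi (Finset.mem_Ici.1 hj))
  have hcard := Finset.card_le_card hsub
  rw [Finset.card_map, Fin.card_Ici, Fin.card_Ioi] at hcard
  omega

lemma not_decomp_pss (α : Equiv.Perm (Fin m)) (β : Equiv.Perm (Fin n)) (hm : 0 < m) (hn : 0 < n) :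
    ¬ Decomp (pss α β) := by
  rintro ⟨p, hp, hpmn, h⟩
  have hnp : n < p := by
    have hfirst := h (Fin.castAdd n ⟨0, hm⟩) hp
    rw [val_pss_castAdd] at hfirst
    omega
  let last : Fin (m + n) := Fin.natAdd m ⟨n - 1, by omega⟩
  have hlast : (pss α β last : ℕ) < p := by
    rw [val_pss_natAdd]
    omega
  have hinv := Equiv.Perm.perm_symm_on_of_perm_on_finite
    (p := fun i : Fin (m + n) => (i : ℕ) < p) h hlast
  rw [Equiv.symm_apply_apply, Fin.val_natAdd] at hinv
  simp only at hinv
  omega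

lemma exists_not_decomp_ple (σ : Equiv.Perm (Fin k)) (N : ℕ) :
    ∃ n, N ≤ n ∧ ∃ s : Equiv.Perm (Fin n), ¬ Decomp s ∧ ple ⟨k, σ⟩ ⟨n, s⟩ :=
  let ρ := pss σ (1 : Equiv.Perm (Fin (N + 1)))
  ⟨_, by omega, pss ρ (1 : Equiv.Perm (Fin 1)), not_decomp_pss _ _ (by omega) one_pos,
    ((isOccurrence_pss_castAdd ρ 1).comp (isOccurrence_pss_castAdd σ 1)).ple⟩

variable {l q : ℕ} {s : Equiv.Perm (Fin p)} {t : Equiv.Perm (Fin q)} {α : Equiv.Perm (Fin m)}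
  {β : Equiv.Perm (Fin n)} {γ : Equiv.Perm (Fin k)} {δ : Equiv.Perm (Fin l)}

lemma IsOccurrence.forall_lt_or_forall_le {f : Fin p → Fin (m + n)} (hs : ¬ Decomp s)
    (hf : IsOccurrence s (pds α β) f) : (∀ i, (f i : ℕ) < m) ∨ ∀ i, m ≤ (f i : ℕ) := by
  by_contra! hcon
  obtain ⟨⟨b, hb⟩, ⟨a, ha⟩⟩ := hcon
  obtain ⟨c, hc⟩ := exists_minimal_of_wellFoundedLT (fun i => m ≤ (f i : ℕ)) ⟨b, hb⟩
  have hlt : ∀ i, i < c → (f i : ℕ) < m := fun i hi => not_le.1 (hc.not_prop_of_lt hi)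
  have hle : ∀ j, c ≤ j → m ≤ (f j : ℕ) := fun j hj => hc.prop.trans (hf.strictMono.monotone hj)
  have hac : a < c := not_le.1 fun hca => (hle a hca).not_gt ha
  exact hs <| decomp_of_forall_lt c (Nat.zero_lt_of_lt hac) fun i j hi hj =>
    (hf.lt_iff_lt i j).2 (pds_lt_pds α β (hlt i hi) (hle j hj))

lemma IsOccurrence.forall_castAdd_lt (hs : ¬ Decomp s) (hn : n < p + k)
    {f : Fin (p + k) → Fin (m + n)} (hf : IsOccurrence (pds s γ) (pds α β) f) (i : Fin p) :
    (f (Fin.castAdd k i) : ℕ) < m := by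
  refine ((hf.comp (isOccurrence_pds_castAdd s γ)).forall_lt_or_forall_le hs).resolve_right
    (fun hright => hn.not_ge ?_) i
  have hall : ∀ j, m ≤ (f j : ℕ) := Fin.addCases hright fun j =>
    (hright i).trans (hf.strictMono.monotone (Fin.le_def.2 (by simp; omega)))
  exact length_le_of_ple (hf.ple_right_of_forall_le hall)

lemma IsOccurrence.forall_le_natAdd (hs : ¬ Decomp s) (hm : m < k + p)
    {f : Fin (k + p) → Fin (m + n)} (hf : IsOccurrence (pds γ s) (pds α β) f) (i : Fin p) :
    m ≤ (f (Fin.natAdd k i) : ℕ) := by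
  refine ((hf.comp (isOccurrence_pds_natAdd γ s)).forall_lt_or_forall_le hs).resolve_left
    (fun hleft => hm.not_ge ?_) i
  have hall : ∀ j, (f j : ℕ) < m := Fin.addCases (fun j =>
    (Fin.le_def.1 (hf.strictMono.monotone (Fin.le_def.2 (by simp; omega)))).trans_lt
      (hleft i)) hleft
  exact length_le_of_ple (hf.ple_left_of_forall_lt hall)

lemma pds_one_ple_or_one_pds_ple (hs : ¬ Decomp s) {π : PermPt} (hsπ : ple ⟨p, s⟩ π)
    (hπ : ple π ⟨m + n, pds α β⟩) (hα : ¬ ple π ⟨m, α⟩) (hβ : ¬ ple π ⟨n, β⟩) :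
    ple ⟨p + 1, pds s 1⟩ π ∨ ple ⟨1 + p, pds 1 s⟩ π := by
  obtain ⟨c, hc⟩ := ple_iff_exists_isOccurrence.1 hsπ
  obtain ⟨f, hf⟩ := ple_iff_exists_isOccurrence.1 hπ
  rcases (hf.comp hc).forall_lt_or_forall_le hs with hleft | hright
  · obtain ⟨q, hq⟩ : ∃ q, m ≤ (f q : ℕ) := by
      by_contra! hall
      exact hα (hf.ple_left_of_forall_lt hall)
    exact .inl (hf.pds_ple_of_lt_of_le hc (.one_const π.2 q) hleft fun _ => hq)
  · obtain ⟨q, hq⟩ : ∃ q, (f q : ℕ) < m := by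
      by_contra! hall
      exact hβ (hf.ple_right_of_forall_le hall)
    exact .inr (hf.pds_ple_of_lt_of_le (.one_const π.2 q) hc (fun _ => hq) hright)

lemma pds_ple_of_pds_ple_of_pds_ple (hs : ¬ Decomp s) (ht : ¬ Decomp t) {π : PermPt}
    (hπ : ple π ⟨m + n, pds α β⟩) (hl : ple ⟨p + k, pds s γ⟩ π) (hr : ple ⟨l + q, pds δ t⟩ π)
    (hn : n < p + k) (hm : m < l + q) : ple ⟨p + q, pds s t⟩ π := by
  obtain ⟨f, hf⟩ := ple_iff_exists_isOccurrence.1 hπ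
  obtain ⟨c, hc⟩ := ple_iff_exists_isOccurrence.1 hl
  obtain ⟨d, hd⟩ := ple_iff_exists_isOccurrence.1 hr
  exact hf.pds_ple_of_lt_of_le (hc.comp (isOccurrence_pds_castAdd s γ))
    (hd.comp (isOccurrence_pds_natAdd δ t)) ((hf.comp hc).forall_castAdd_lt hs hn)
    ((hf.comp hd).forall_le_natAdd ht hm)

end Indecomposable

section Disconnected

lemma disconn_of_ple_or_ple {S : Set PermPt} {a b : PermPt} (ha : a ∈ S) (hb : b ∈ S)
    (hcover : ∀ π ∈ S, ple a π ∨ ple b π) (hdisj : ∀ π ∈ S, ple a π → ¬ ple b π) :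
    Disconn S := by
  refine ⟨{π ∈ S | ple a π}, {π ∈ S | ple b π}, ?_, ⟨a, ha, ple_refl a⟩, ⟨b, hb, ple_refl b⟩, ?_⟩
  · rw [← Set.sep_or]
    exact Set.sep_eq_self_iff_mem_true.2 hcover
  · rintro x ⟨hx, hax⟩ y ⟨hy, hby⟩
    exact ⟨fun hxy => hdisj y hy (ple_trans hax hxy) hby,
      fun hyx => hdisj x hx hax (ple_trans hby hyx)⟩

variable {n : ℕ} {s : Equiv.Perm (Fin n)}

theorem disconn_Ioo_pds_self (hn : 2 ≤ n) (hs : ¬ Decomp s) :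
    Disconn {π | plt ⟨n, s⟩ π ∧ plt π ⟨n + n, pds s s⟩} := by
  have hleft := isOccurrence_pds_castAdd s s
  have hright := isOccurrence_pds_natAdd s s
  let z : Fin n := ⟨0, by omega⟩
  have h1 : ple ⟨n + 1, pds s 1⟩ ⟨n + n, pds s s⟩ :=
    IsOccurrence.id.pds_ple_of_lt_of_le hleft (.one_const _ (Fin.natAdd n z)) (by simp) (by simp)
  have h2 : ple ⟨1 + n, pds 1 s⟩ ⟨n + n, pds s s⟩ :=
    IsOccurrence.id.pds_ple_of_lt_of_le (.one_const _ (Fin.castAdd n z)) hright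
      (by simp [z]; omega) (by simp)
  refine disconn_of_ple_or_ple (a := ⟨n + 1, pds s 1⟩) (b := ⟨1 + n, pds 1 s⟩)
    ⟨plt_of_ple_of_length_lt (isOccurrence_pds_castAdd s 1).ple (by simp),
      plt_of_ple_of_length_lt h1 (Nat.add_lt_add_left hn n)⟩
    ⟨plt_of_ple_of_length_lt (isOccurrence_pds_natAdd 1 s).ple (by simp),
      plt_of_ple_of_length_lt h2 (Nat.add_lt_add_right hn n)⟩
    (fun π hπ => pds_one_ple_or_one_pds_ple hs hπ.1.1 hπ.2.1 hπ.1.2 hπ.1.2)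
    fun π hπ hl hr => hπ.2.2 (pds_ple_of_pds_ple_of_pds_ple hs hs hπ.2.1 hl hr
      (by simp) (by simp))

lemma hasNTDisc_of_ple_of_pds_self_ple {σ τ : PermPt} (hn : 3 ≤ n) (hs : ¬ Decomp s)
    (hσ : ple σ ⟨n, s⟩) (hτ : ple ⟨n + n, pds s s⟩ τ) : HasNTDisc σ τ :=
  ⟨⟨n, s⟩, ⟨n + n, pds s s⟩, hσ, (isOccurrence_pds_castAdd s s).ple, hτ, Nat.add_le_add_left hn n,
    disconn_Ioo_pds_self (by omega) hs⟩

end Disconnected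

section Counting

/-- The permutation acting as `g j` on the `j`-th block `e (j, ·)` and fixing everything outside
the blocks. -/
noncomputable def blockPerm {ι κ α : Type*} (e : ι × κ ↪ α) (g : ι → Equiv.Perm κ) :
    Equiv.Perm α :=
  Equiv.Perm.viaEmbedding (Equiv.prodCongrRight g) e

lemma blockPerm_apply {ι κ α : Type*} (e : ι × κ ↪ α) (g : ι → Equiv.Perm κ) (j : ι) (i : κ) :
    blockPerm e g (e (j, i)) = e (j, g j i) := by
  simp [blockPerm, Equiv.Perm.viaEmbedding_apply]

lemma card_filter_mul_card_le {G ι : Type*} [Group G] [Fintype G] [Fintype ι] (P : G → Prop)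
    [DecidablePred P] (b : ι → G) (C : ℕ)
    (hC : ∀ x, (Finset.univ.filter fun i => P (x * b i)).card ≤ C) :
    (Finset.univ.filter P).card * Fintype.card ι ≤ C * Fintype.card G := by
  have htranslate : ∀ i, (Finset.univ.filter P).card =
      (Finset.univ.filter fun x => P (x * b i)).card := fun i =>
    (Finset.card_equiv (Equiv.mulRight (b i)) (by simp)).symm
  have hdouble := Finset.card_mul_le_card_mul (s := Finset.univ) (t := Finset.univ)
    (fun i x => P (x * b i)) (fun i _ => (htranslate i).le) fun x _ => hC x
  simpa only [Finset.card_univ, mul_comm] using hdouble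

lemma exists_perm_forall_le_iff_le {l : ℕ} {α : Type*} [LinearOrder α] {u : Fin l → α}
    (hu : Function.Injective u) (π : Equiv.Perm (Fin l)) :
    ∃ h : Equiv.Perm (Fin l), ∀ a b, π a ≤ π b ↔ u (h a) ≤ u (h b) :=
  have hsort : StrictMono (u ∘ Tuple.sort u) :=
    (Tuple.monotone_sort u).strictMono_of_injective (hu.comp (Tuple.sort u).injective)
  ⟨π.trans (Tuple.sort u), fun _ _ => hsort.le_iff_le.symm⟩

variable {l n : ℕ}

lemma card_blockPerm_not_ple_le {ι : Type*} [Fintype ι] [DecidableEq ι] (π : Equiv.Perm (Fin l))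
    (e : ι × Fin l ↪ Fin n) (he : ∀ j, StrictMono fun i => e (j, i)) (τ : Equiv.Perm (Fin n)) :
    (Finset.univ.filter fun g => ¬ ple ⟨l, π⟩ ⟨n, τ * blockPerm e g⟩).card ≤
      (l.factorial - 1) ^ Fintype.card ι := by
  choose h hh using fun j =>
    exists_perm_forall_le_iff_le (τ.injective.comp (he j).injective) π
  have hsub : (Finset.univ.filter fun g => ¬ ple ⟨l, π⟩ ⟨n, τ * blockPerm e g⟩) ⊆
      Fintype.piFinset fun j => Finset.univ.erase (h j) := by
    intro g hg
    refine Fintype.mem_piFinset.2 fun j => Finset.mem_erase.2 ⟨fun hgj => ?_, Finset.mem_univ _⟩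
    refine (Finset.mem_filter.1 hg).2 ⟨fun i => e (j, i), he j, ?_⟩
    simpa only [Equiv.Perm.mul_apply, blockPerm_apply, hgj, Function.comp_apply] using hh j
  exact (Finset.card_le_card hsub).trans_eq (by simp [Finset.card_erase_of_mem, Fintype.card_perm])

lemma card_not_ple_mul_factorial_pow_le {q : ℕ} (π : Equiv.Perm (Fin l)) (hq : q * l ≤ n) :
    (Finset.univ.filter fun τ => ¬ ple ⟨l, π⟩ ⟨n, τ⟩).card * l.factorial ^ q ≤
      (l.factorial - 1) ^ q * n.factorial := by
  let e : Fin q × Fin l ↪ Fin n := finProdFinEquiv.toEmbedding.trans (Fin.castLEEmb hq)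
  have he : ∀ j, StrictMono fun i => e (j, i) := fun _ _ _ hab =>
    Fin.lt_def.2 (by simpa [e] using hab)
  simpa [Fintype.card_perm] using card_filter_mul_card_le (fun τ => ¬ ple ⟨l, π⟩ ⟨n, τ⟩)
    (blockPerm e) _ (card_blockPerm_not_ple_le π e he)

theorem one_sub_pow_le_ncard_ple_div_factorial {q : ℕ} (π : Equiv.Perm (Fin l))
    (hq : q * l ≤ n) :
    1 - (1 - 1 / (l.factorial : ℝ)) ^ q ≤
      ({τ : Equiv.Perm (Fin n) | ple ⟨l, π⟩ ⟨n, τ⟩}.ncard : ℝ) / n.factorial := by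
  have hl : (0 : ℝ) < l.factorial := mod_cast l.factorial_pos
  have hn : (0 : ℝ) < n.factorial := mod_cast n.factorial_pos
  have htotal : ({τ : Equiv.Perm (Fin n) | ple ⟨l, π⟩ ⟨n, τ⟩}.ncard : ℝ) +
      (Finset.univ.filter fun τ => ¬ ple ⟨l, π⟩ ⟨n, τ⟩).card = n.factorial := by
    have h := Finset.card_filter_add_card_filter_not (s := Finset.univ)
      fun τ : Equiv.Perm (Fin n) => ple ⟨l, π⟩ ⟨n, τ⟩
    rw [Finset.card_univ, Fintype.card_perm, Fintype.card_fin, ← Set.ncard_coe_finset,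
      Finset.coe_filter_univ] at h
    exact_mod_cast h
  have havoid : ((Finset.univ.filter fun τ => ¬ ple ⟨l, π⟩ ⟨n, τ⟩).card : ℝ) ≤
      (1 - 1 / (l.factorial : ℝ)) ^ q * n.factorial := by
    have h : ((Finset.univ.filter fun τ => ¬ ple ⟨l, π⟩ ⟨n, τ⟩).card : ℝ) * l.factorial ^ q ≤
        (l.factorial - 1) ^ q * n.factorial := by
      rw [← Nat.cast_pred l.factorial_pos]
      exact_mod_cast card_not_ple_mul_factorial_pow_le π hq
    rwa [one_sub_div hl.ne', div_pow, div_mul_eq_mul_div, le_div_iff₀ (by positivity)]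
  rw [le_div_iff₀ hn, sub_mul, one_mul]
  linarith

lemma ncard_div_factorial_le_one (S : Set (Equiv.Perm (Fin n))) :
    (S.ncard : ℝ) / n.factorial ≤ 1 := by
  have hcard : S.ncard ≤ n.factorial := by
    simpa [Nat.card_eq_fintype_card, Fintype.card_perm] using S.ncard_le_card
  exact div_le_one_of_le₀ (mod_cast hcard) (Nat.cast_nonneg _)

theorem tendsto_ncard_ple_div_factorial (π : Equiv.Perm (Fin l)) :
    Filter.Tendsto
      (fun n : ℕ => ({τ : Equiv.Perm (Fin n) | ple ⟨l, π⟩ ⟨n, τ⟩}.ncard : ℝ) / n.factorial)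
      Filter.atTop (nhds 1) := by
  have hl : (1 : ℝ) ≤ l.factorial := mod_cast l.factorial_pos
  have hpow : Filter.Tendsto (fun n : ℕ => (1 - 1 / (l.factorial : ℝ)) ^ (n / (l + 1)))
      Filter.atTop (nhds 0) :=
    (tendsto_pow_atTop_nhds_zero_of_lt_one (sub_nonneg.2 (div_le_one_of_le₀ hl (by positivity)))
      (sub_lt_self 1 (by positivity))).comp (Nat.tendsto_div_const_atTop l.succ_ne_zero)
  have hlower := hpow.const_sub 1
  rw [sub_zero] at hlower
  refine tendsto_of_tendsto_of_tendsto_of_le_of_le hlower tendsto_const_nhds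
    (fun n => ?_) fun n => ncard_div_factorial_le_one _
  -- Blocks of length `l + 1` rather than `l`, so that `l = 0` is covered.
  exact one_sub_pow_le_ncard_ple_div_factorial π
    ((Nat.mul_le_mul_left _ l.le_succ).trans (Nat.div_mul_le_self n (l + 1)))

end Counting

/-- For a fixed permutation `σ`, the probability that `[σ,τ]` contains a
non-trivial disconnected subinterval, for a uniformly random permutation `τ`
of length `n`, tends to 1 as `n → ∞`. -/
theorem almost_all_have_disconnected_subinterval (k : ℕ) (σ : Equiv.Perm (Fin k)) :
    Filter.Tendsto
      (fun n : ℕ =>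
        (Set.ncard {τ : Equiv.Perm (Fin n) | HasNTDisc ⟨k, σ⟩ ⟨n, τ⟩} : ℝ) /
          (Nat.factorial n : ℝ))
      Filter.atTop (nhds 1) := by
  obtain ⟨n, hn, s, hs, hσ⟩ := exists_not_decomp_ple σ 3
  refine tendsto_of_tendsto_of_tendsto_of_le_of_le (tendsto_ncard_ple_div_factorial (pds s s))
    tendsto_const_nhds (fun N => ?_) fun N => ncard_div_factorial_le_one _
  have hsub : {τ : Equiv.Perm (Fin N) | ple ⟨n + n, pds s s⟩ ⟨N, τ⟩} ⊆
      {τ | HasNTDisc ⟨k, σ⟩ ⟨N, τ⟩} := fun τ hτ => hasNTDisc_of_ple_of_pds_self_ple hn hs hσ hτ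
  have hcard := Set.ncard_le_ncard hsub
  exact div_le_div_of_nonneg_right (Nat.cast_le.2 hcard) (Nat.cast_nonneg _)
end

section
/- Let σ and τ be nonempty permutations with finest decompositions σ = σ₁ ⊕ ⋯ ⊕ σ_s and τ = τ₁ ⊕ ⋯ ⊕ τ_t with t ≥ 2 and |τ₁| > 1. Let k ≥ 1 be the largest integer such that τ₁ = ⋯ = τ_k. Then μ(σ,τ) = Σ_{i=1}^{s} Σ_{j=1}^{k} μ(σ_{≤i}, τ₁) · μ(σ_{>i}, τ_{>j}). -/
open scoped Classical

/-- Direct sum of a list of permutations. -/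
def psum (l : List PermPt) : PermPt := l.foldr pdsP pempty

/-- `mu` is the Möbius function of the pattern poset (including the empty
permutation): `mu x x = 1`, `mu x z = 0` when `x ≰ z`, and the values of `mu`
on an interval `[x,z]` with `x < z` sum to zero. -/
def IsMobius (mu : PermPt → PermPt → ℤ) : Prop :=
  (∀ x : PermPt, mu x x = 1) ∧
  (∀ x z : PermPt, ¬ ple x z → mu x z = 0) ∧
  (∀ x z : PermPt, ple x z → x ≠ z →
    ∑ᶠ y ∈ {y : PermPt | ple x y ∧ ple y z}, mu x y = 0)

/-!
A pattern is a word in indecomposable patterns, and the words below a concatenation `x * y` are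
exactly the concatenations of a word below `x` and a word below `y`. Nothing else about containment
is needed. Collect the Möbius function in the noncommutative generating polynomials
`M(z) = ∑ w ≤ z, μ(w, z) w`; they are determined by `∑ w ≤ z, M(w) = z`.

Let `N(z)` be the product of `M(a)` over the letters `a` of `z`, with `M(a)` replaced by `M(a) + 1`
whenever the next letter is again `a`. A word below `x * y` factors uniquely as `u * v` with `v ≤ y`
and `u ≤ x` not extendable by the first letter `c` of `v`. Then `N(u v) = N_c(u) N(v)`, where `N_c`
treats `c` as the letter following `u`. Since `N_c(u c) = N(u c) + N_c(u)`, the sum of `N_c(u)` over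
the `u ≤ x` with `u c ≰ x` telescopes to `∑ u ≤ x, N(u)`. Hence `∑ w ≤ x * y, N(w)` is the product
of the sums over `x` and over `y`, and `N = M` by induction, that is
`M(a r) = (M(a) + [a is the first letter of r]) M(r)`.

Iterating over a leading run gives `M(a ^ k r) = M(a) ∑ j < k, M(a ^ j r)` if `r` does not start
with `a`, and the formula follows by comparing coefficients. Its term `i = 0` vanishes: the pattern
`1` is the only atom, so `μ(∅, a) = 0` when `|a| > 1`.
-/

section

open Finset FreeMonoid

/-! ### Incidence algebras -/

section IncidenceAlgebra

variable {R P : Type*} [Ring R] [PartialOrder P] [LocallyFiniteOrder P]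

lemma eq_mu_of_sum_Icc {f : IncidenceAlgebra R P}
    (hf : ∀ a b, a ≤ b → ∑ x ∈ Icc a b, f a x = if a = b then 1 else 0) :
    f = IncidenceAlgebra.mu R := by
  refine left_inv_eq_right_inv (a := IncidenceAlgebra.zeta R) ?_ IncidenceAlgebra.zeta_mul_mu
  ext a b hab
  rw [IncidenceAlgebra.one_apply, ← hf a b hab, IncidenceAlgebra.mul_apply]
  refine sum_congr rfl fun x hx => ?_
  rw [IncidenceAlgebra.zeta_of_le (mem_Icc.1 hx).2, mul_one]

lemma mu_eq_zero_of_forall_le {a b x : P} (hba : b < a) (hax : a < x)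
    (h : ∀ y, b < y → y ≤ x → a ≤ y) : IncidenceAlgebra.mu R b x = 0 := by
  have hIoc : Ioc b x = Icc a x := by
    ext y
    simp only [mem_Ioc, mem_Icc]
    exact ⟨fun hy => ⟨h y hy.1 hy.2, hy.2⟩, fun hy => ⟨hba.trans_le hy.1, hy.2⟩⟩
  rw [IncidenceAlgebra.mu_eq_neg_sum_Ioc_of_ne (hba.trans hax).ne, hIoc,
    IncidenceAlgebra.sum_Icc_mu_left, if_neg hax.ne, neg_zero]

end IncidenceAlgebra

/-! ### Words -/

section RunWeight

variable {α R : Type*} [Semiring R] (m : α → R) (o : Option α)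

/-- The product of the factors `m a` over the letters `a` of a word, each increased by `1` if the
next letter is also `a`. The letter following the last one is `o`, if any. For
`m a = mobiusPoly R (of a)` and `o = none` this is the Möbius polynomial of the word. -/
noncomputable def runWeight (w : FreeMonoid α) : R :=
  w.recOn 1 fun a r weight => (m a + if r.toList.head?.or o = some a then 1 else 0) * weight

@[simp] lemma runWeight_one : runWeight m o 1 = 1 := rfl

lemma runWeight_of_mul (a : α) (r : FreeMonoid α) :
    runWeight m o (of a * r) =
      (m a + if r.toList.head?.or o = some a then 1 else 0) * runWeight m o r := rfl

@[simp] lemma runWeight_none_of (a : α) : runWeight m none (of a) = m a := by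
  simpa using runWeight_of_mul m none a 1

lemma runWeight_mul (u v : FreeMonoid α) :
    runWeight m o (u * v) = runWeight m (v.toList.head?.or o) u * runWeight m o v := by
  induction u using FreeMonoid.inductionOn' with
  | one => simp
  | of_mul a u ih =>
    rw [mul_assoc, runWeight_of_mul, runWeight_of_mul, ih, mul_assoc, toList_mul,
      List.head?_append, Option.or_assoc]

lemma runWeight_mul_of (u : FreeMonoid α) (c d : α) :
    runWeight m (some c) (u * of d) =
      runWeight m none (u * of d) + if c = d then runWeight m (some c) u else 0 := by
  have hof : runWeight m (some c) (of d) = m d + if c = d then 1 else 0 := by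
    simpa using runWeight_of_mul m (some c) d 1
  rw [runWeight_mul, runWeight_mul, hof, runWeight_none_of]
  split_ifs with hcd <;> simp [hcd, mul_add]

lemma runWeight_some_eq_none {c : α} {w : FreeMonoid α} (hw : ∀ u, w ≠ u * of c) :
    runWeight m (some c) w = runWeight m none w := by
  obtain rfl | ⟨u, d, rfl⟩ : w = 1 ∨ ∃ (u : FreeMonoid α) (d : α), w = u * of d :=
    List.eq_nil_or_concat' w.toList
  · rfl
  · rw [runWeight_mul_of, if_neg fun hcd : c = d => hw u (hcd ▸ rfl), add_zero]

end RunWeight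

lemma coeff_mul_ofList {α R : Type*} [Semiring R] (f g : MonoidAlgebra R (FreeMonoid α))
    (l : List α) :
    (f * g).coeff (ofList l) =
      ∑ i ∈ range (l.length + 1), f.coeff (ofList (l.take i)) * g.coeff (ofList (l.drop i)) := by
  rw [MonoidAlgebra.coeff_mul_antidiag f g (ofList l)
    ((range (l.length + 1)).image fun i => (ofList (l.take i), ofList (l.drop i)))]
  · refine sum_image fun i hi j hj hij => ?_
    have hlen : (l.take i).length = (l.take j).length := congrArg (fun p => p.1.length) hij
    grind
  · rintro ⟨u, v⟩
    simp only [mem_image, mem_range, Prod.mk.injEq]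
    constructor
    · rintro ⟨i, -, rfl, rfl⟩
      rw [← ofList_append, List.take_append_drop]
    · intro huv
      obtain rfl : u.toList ++ v.toList = l := huv
      exact ⟨u.toList.length, by simp, by simp, by simp⟩

lemma ofList_drop_eq_of_pow_mul {α : Type*} {l : List α} {a : α} {j k : ℕ}
    (hl : ∀ i < k, l[i]? = some a) (hj : j ≤ k) :
    ofList (l.drop j) = of a ^ (k - j) * ofList (l.drop k) := by
  induction hj using Nat.decreasingInduction with
  | self => simp
  | of_succ j hj ih =>
    obtain ⟨hjl, rfl⟩ := List.getElem?_eq_some_iff.1 (hl j hj)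
    rw [List.drop_eq_getElem_cons hjl, ofList_cons, ih, ← mul_assoc, ← pow_succ',
      ← Nat.sub_add_comm hj, Nat.add_sub_add_right]

/-- A partial order on words for which the words below a concatenation are exactly the
concatenations of words below the factors. -/
class IsConcatOrder (α : Type*) [PartialOrder (FreeMonoid α)] : Prop where
  one_le (w : FreeMonoid α) : 1 ≤ w
  le_mul_iff {w x y : FreeMonoid α} : w ≤ x * y ↔ ∃ u v, w = u * v ∧ u ≤ x ∧ v ≤ y

namespace IsConcatOrder

/-- A factorization `u * v` is greedy with respect to `x` if `u` lies below `x` but cannot be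
lengthened by the first letter of `v`. -/
def IsGreedy {α : Type*} [LE (FreeMonoid α)] (x u v : FreeMonoid α) : Prop :=
  u ≤ x ∧ ∀ c ∈ v.toList.head?, ¬ u * of c ≤ x

/-- The generating polynomial, in the noncommuting letters, of the Möbius function below `z`. -/
noncomputable def mobiusPoly {α : Type*} (R : Type*) [Ring R] [Preorder (FreeMonoid α)]
    [LocallyFiniteOrder (FreeMonoid α)] (z : FreeMonoid α) : MonoidAlgebra R (FreeMonoid α) :=
  ∑ w ∈ Icc 1 z, .single w (IncidenceAlgebra.mu R w z)

variable {α R : Type*} [PartialOrder (FreeMonoid α)] [IsConcatOrder α] {u v w x y z : FreeMonoid α}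

lemma le_mul_right : u ≤ u * v := le_mul_iff.2 ⟨u, 1, (mul_one u).symm, le_rfl, one_le v⟩

lemma le_mul_left : v ≤ u * v := le_mul_iff.2 ⟨1, v, (one_mul v).symm, one_le u, le_rfl⟩

lemma exists_isGreedy (hu : u ≤ x) (hv : v ≤ y) :
    ∃ u' v', IsGreedy x u' v' ∧ v' ≤ y ∧ u' * v' = u * v := by
  induction v using FreeMonoid.inductionOn' generalizing u with
  | one => exact ⟨u, 1, ⟨hu, by simp⟩, hv, rfl⟩
  | of_mul c v ih =>
    by_cases hc : u * of c ≤ x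
    · simpa only [mul_assoc] using ih hc (le_mul_left.trans hv)
    · exact ⟨u, of c * v, ⟨hu, by simpa using hc⟩, hv, rfl⟩

lemma IsGreedy.eq_one {e : FreeMonoid α} (h : IsGreedy x u (e * v)) (he : u * e ≤ x) : e = 1 := by
  induction e using FreeMonoid.casesOn with
  | one => rfl
  | of_mul c e => exact (h.2 c (by simp) (le_mul_right.trans (by rwa [mul_assoc]))).elim

lemma IsGreedy.unique {u' v' : FreeMonoid α} (h : IsGreedy x u v) (h' : IsGreedy x u' v')
    (huv : u * v = u' * v') : u = u' ∧ v = v' := by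
  obtain ⟨e, rfl, rfl⟩ | ⟨e, rfl, rfl⟩ :
      (∃ e, u' = u * e ∧ v = e * v') ∨ ∃ e, u = u' * e ∧ v' = e * v :=
    List.append_eq_append_iff.1 huv
  · simp [h.eq_one h'.1]
  · simp [h'.eq_one h.1]

variable [LocallyFiniteOrder (FreeMonoid α)]

lemma sum_Icc_mul [AddCommMonoid R] (f : FreeMonoid α → R) :
    ∑ w ∈ Icc 1 (x * y), f w = ∑ v ∈ Icc 1 y, ∑ u ∈ Icc 1 x with IsGreedy x u v, f (u * v) := by
  rw [sum_sigma']
  symm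
  refine sum_bij (fun p _ => p.2 * p.1) ?_ ?_ ?_ fun _ _ => rfl
  · rintro ⟨v, u⟩ h
    simp only [mem_sigma, mem_filter, mem_Icc] at h
    exact mem_Icc.2 ⟨one_le _, le_mul_iff.2 ⟨u, v, rfl, h.2.1.2, h.1.2⟩⟩
  · rintro ⟨v, u⟩ h ⟨v', u'⟩ h' huv
    simp only [mem_sigma, mem_filter] at h h'
    obtain ⟨rfl, rfl⟩ := h.2.2.unique h'.2.2 huv
    rfl
  · intro w hw
    obtain ⟨u, v, rfl, hu, hv⟩ := le_mul_iff.1 (mem_Icc.1 hw).2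
    obtain ⟨u', v', hgreedy, hv', huv⟩ := exists_isGreedy hu hv
    refine ⟨⟨v', u'⟩, ?_, huv⟩
    simp [one_le, hv', hgreedy.1, hgreedy]

section RunWeight

variable [Ring R] (m : α → R)

lemma sum_runWeight_some_sub_none (c : α) :
    ∑ w ∈ Icc 1 x, (runWeight m (some c) w - runWeight m none w) =
      ∑ u ∈ Icc 1 x with u * of c ≤ x, runWeight m (some c) u := by
  have himage : {u ∈ Icc 1 x | u * of c ≤ x}.image (· * of c) ⊆ Icc 1 x :=
    image_subset_iff.2 fun u hu => mem_Icc.2 ⟨one_le _, (mem_filter.1 hu).2⟩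
  rw [← sum_subset himage, sum_image fun _ _ _ _ h => mul_right_cancel h]
  · exact sum_congr rfl fun u _ => by simp [runWeight_mul_of]
  · intro w hw hwc
    refine sub_eq_zero.2 (runWeight_some_eq_none m fun u hu => hwc (mem_image.2 ⟨u, ?_, hu.symm⟩))
    have huc : u * of c ≤ x := hu ▸ (mem_Icc.1 hw).2
    exact mem_filter.2 ⟨mem_Icc.2 ⟨one_le u, le_mul_right.trans huc⟩, huc⟩

lemma sum_isGreedy_runWeight (v : FreeMonoid α) :
    ∑ u ∈ Icc 1 x with IsGreedy x u v, runWeight m v.toList.head? u =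
      ∑ u ∈ Icc 1 x, runWeight m none u := by
  cases hc : v.toList.head? with
  | none =>
    congr 1
    exact filter_true_of_mem fun u hu => ⟨(mem_Icc.1 hu).2, by simp [hc]⟩
  | some c =>
    have hfilter : {u ∈ Icc 1 x | IsGreedy x u v} = {u ∈ Icc 1 x | ¬ u * of c ≤ x} :=
      filter_congr fun u hu => by simp [IsGreedy, hc, (mem_Icc.1 hu).2]
    rw [hfilter, ← sub_sub_self (∑ w ∈ Icc 1 x, runWeight m (some c) w) (∑ u ∈ Icc 1 x, _),
      ← sum_sub_distrib, sum_runWeight_some_sub_none, eq_sub_iff_add_eq, add_comm]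
    exact sum_filter_add_sum_filter_not _ _ _

lemma sum_Icc_mul_runWeight :
    ∑ w ∈ Icc 1 (x * y), runWeight m none w =
      (∑ u ∈ Icc 1 x, runWeight m none u) * ∑ v ∈ Icc 1 y, runWeight m none v := by
  simp only [sum_Icc_mul, runWeight_mul, Option.or_none]
  simp only [← sum_mul, sum_isGreedy_runWeight, mul_sum]

end RunWeight

section MobiusPoly

variable (R) [Ring R]

lemma coeff_mobiusPoly (w z : FreeMonoid α) :
    (mobiusPoly R z).coeff w = IncidenceAlgebra.mu R w z := by
  rw [mobiusPoly, MonoidAlgebra.coeff_sum, Finsupp.finsetSum_apply]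
  simp only [MonoidAlgebra.coeff_single, Finsupp.single_apply, sum_ite_eq', mem_Icc, one_le,
    true_and]
  exact ite_eq_left_iff.2 fun h => (IncidenceAlgebra.apply_eq_zero_of_not_le h _).symm

lemma sum_Icc_mobiusPoly (z : FreeMonoid α) : ∑ w ∈ Icc 1 z, mobiusPoly R w = .single z 1 := by
  ext v
  rw [MonoidAlgebra.coeff_sum, Finsupp.finsetSum_apply, MonoidAlgebra.coeff_single,
    Finsupp.single_apply]
  simp only [coeff_mobiusPoly, eq_comm (a := z)]
  rw [← IncidenceAlgebra.sum_Icc_mu_right, sum_subset (Icc_subset_Icc_left (one_le v))]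
  intro w hw hvw
  refine IncidenceAlgebra.apply_eq_zero_of_not_le (fun hle => hvw ?_) _
  exact mem_Icc.2 ⟨hle, (mem_Icc.1 hw).2⟩

lemma mobiusPoly_eq_of_forall_lt {f : FreeMonoid α → MonoidAlgebra R (FreeMonoid α)}
    (hf : ∑ w ∈ Icc 1 z, f w = .single z 1) (hlt : ∀ w < z, mobiusPoly R w = f w) :
    mobiusPoly R z = f z := by
  have h := (sum_Icc_mobiusPoly R z).trans hf.symm
  rw [← Ico_insert_right (one_le z), sum_insert right_notMem_Ico, sum_insert right_notMem_Ico,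
    sum_congr rfl fun w hw => hlt w (mem_Ico.1 hw).2] at h
  exact add_right_cancel h

lemma mobiusPoly_eq_runWeight (z : FreeMonoid α) :
    mobiusPoly R z = runWeight (fun a => mobiusPoly R (of a)) none z := by
  induction hn : (Icc 1 z).card using Nat.strong_induction_on generalizing z with
  | h n ih =>
    have hlt (w : FreeMonoid α) (hw : w < z) :
        mobiusPoly R w = runWeight (fun a => mobiusPoly R (of a)) none w :=
      ih _ (hn ▸ card_lt_card (Icc_ssubset_Icc_right (one_le z) le_rfl hw)) w rfl
    have hsum (w : FreeMonoid α) (hw : w < z) :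
        ∑ v ∈ Icc 1 w, runWeight (fun a => mobiusPoly R (of a)) none v = .single w 1 := by
      rw [← sum_Icc_mobiusPoly]
      exact sum_congr rfl fun v hv => (hlt v ((mem_Icc.1 hv).2.trans_lt hw)).symm
    induction z using FreeMonoid.casesOn with
    | one => simp [mobiusPoly, MonoidAlgebra.one_def]
    | of_mul a t =>
      obtain rfl | ht := eq_or_ne t 1
      · simp
      · refine mobiusPoly_eq_of_forall_lt R ?_ hlt
        rw [sum_Icc_mul_runWeight, hsum, hsum, MonoidAlgebra.single_mul_single, mul_one]
        · exact lt_of_le_of_ne le_mul_left (by simp)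
        · exact lt_of_le_of_ne le_mul_right (by simpa using ht)

lemma mobiusPoly_of_mul (a : α) (r : FreeMonoid α) :
    mobiusPoly R (of a * r) =
      (mobiusPoly R (of a) + if r.toList.head? = some a then 1 else 0) * mobiusPoly R r := by
  rw [mobiusPoly_eq_runWeight R (of a * r), runWeight_of_mul, Option.or_none,
    ← mobiusPoly_eq_runWeight]

lemma mobiusPoly_of_pow_mul {a : α} {r : FreeMonoid α} (hr : r.toList.head? ≠ some a) (k : ℕ) :
    mobiusPoly R (of a ^ (k + 1) * r) =
      mobiusPoly R (of a) * ∑ j ∈ range (k + 1), mobiusPoly R (of a ^ j * r) := by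
  induction k with
  | zero => simp [mobiusPoly_of_mul, hr]
  | succ k ih =>
    have hhead : (of a ^ (k + 1) * r).toList.head? = some a := by
      rw [pow_succ', mul_assoc, toList_of_mul, List.head?_cons]
    rw [pow_succ', mul_assoc, mobiusPoly_of_mul, if_pos hhead, sum_range_succ, mul_add, ← ih,
      add_mul, one_mul, add_comm]

theorem mu_of_pow_mul {a : α} {r : FreeMonoid α} (ha : IncidenceAlgebra.mu R 1 (of a) = 0)
    (hr : r.toList.head? ≠ some a) {k : ℕ} (hk : 1 ≤ k) (l : List α) :
    IncidenceAlgebra.mu R (ofList l) (of a ^ k * r) =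
      ∑ i ∈ Icc 1 l.length, ∑ j ∈ Icc 1 k,
        IncidenceAlgebra.mu R (ofList (l.take i)) (of a) *
          IncidenceAlgebra.mu R (ofList (l.drop i)) (of a ^ (k - j) * r) := by
  obtain ⟨k, rfl⟩ := Nat.exists_eq_add_of_le' hk
  have hreflect : ∑ j ∈ range (k + 1), mobiusPoly R (of a ^ j * r) =
      ∑ j ∈ Icc 1 (k + 1), mobiusPoly R (of a ^ (k + 1 - j) * r) :=
    sum_nbij' (k + 1 - ·) (k + 1 - ·) (by grind) (by grind) (by grind) (by grind) (by grind)
  rw [← coeff_mobiusPoly, mobiusPoly_of_pow_mul R hr, hreflect, coeff_mul_ofList,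
    sum_range_eq_add_Ico _ (Nat.succ_pos _), List.take_zero, ofList_nil, coeff_mobiusPoly, ha,
    zero_mul, zero_add, Nat.succ_eq_add_one, Ico_add_one_right_eq_Icc]
  simp only [MonoidAlgebra.coeff_sum, Finsupp.finsetSum_apply, coeff_mobiusPoly, mul_sum]

end MobiusPoly

end IsConcatOrder

/-! ### Direct sums and containment of patterns -/

namespace PermPt

variable {m n : ℕ} {a b c d x y z : PermPt}

@[simp] lemma pds_castAdd (α : Equiv.Perm (Fin m)) (β : Equiv.Perm (Fin n)) (i : Fin m) :
    pds α β (Fin.castAdd n i) = Fin.castAdd n (α i) := by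
  simp [pds]

@[simp] lemma pds_natAdd (α : Equiv.Perm (Fin m)) (β : Equiv.Perm (Fin n)) (j : Fin n) :
    pds α β (Fin.natAdd m j) = Fin.natAdd m (β j) := by
  simp [pds]

@[simp] lemma pdsP_fst (a b : PermPt) : (pdsP a b).1 = a.1 + b.1 := rfl

lemma exists_eq_pds {π : Equiv.Perm (Fin (m + n))}
    (hπ : ∀ i : Fin m, (π (Fin.castAdd n i) : ℕ) < m) :
    ∃ (α : Equiv.Perm (Fin m)) (β : Equiv.Perm (Fin n)), π = pds α β := by
  let ρ : Equiv.Perm (Fin m ⊕ Fin n) := finSumFinEquiv.trans (π.trans finSumFinEquiv.symm)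
  have hρ : Set.MapsTo ρ (Set.range Sum.inl) (Set.range Sum.inl) := by
    rintro _ ⟨i, rfl⟩
    exact ⟨⟨_, hπ i⟩, (finSumFinEquiv.symm_apply_eq.2 rfl).symm⟩
  obtain ⟨⟨α, β⟩, hαβ⟩ := Equiv.Perm.mem_sumCongrHom_range_of_perm_mapsTo_inl hρ
  refine ⟨α, β, Equiv.ext fun i => ?_⟩
  have hi : Equiv.sumCongr α β (finSumFinEquiv.symm i) = ρ (finSumFinEquiv.symm i) :=
    congrArg (fun f : Equiv.Perm (Fin m ⊕ Fin n) => f (finSumFinEquiv.symm i)) hαβ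
  simp [pds, hi, ρ]

lemma exists_eq_pdsP (hm : m ≤ x.1) (hx : ∀ i : Fin x.1, (i : ℕ) < m → (x.2 i : ℕ) < m) :
    ∃ a b, a.1 = m ∧ x = pdsP a b := by
  obtain ⟨N, π⟩ := x
  obtain ⟨n, rfl⟩ := Nat.exists_eq_add_of_le hm
  obtain ⟨α, β, rfl⟩ := exists_eq_pds fun i => hx (Fin.castAdd n i) i.2
  exact ⟨⟨m, α⟩, ⟨n, β⟩, rfl, rfl⟩

lemma exists_eq_pdsP_of_decomp (hx : Decomp x.2) :
    ∃ a b, a.1 < x.1 ∧ b.1 < x.1 ∧ x = pdsP a b := by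
  obtain ⟨m, hm, hmx, h⟩ := hx
  obtain ⟨a, b, rfl, rfl⟩ := exists_eq_pdsP hmx.le h
  exact ⟨a, b, hmx, by simpa using hm, rfl⟩

lemma decomp_pdsP (ha : 0 < a.1) (hb : 0 < b.1) : Decomp (pdsP a b).2 := by
  refine ⟨a.1, ha, by simpa using hb, fun i hi => ?_⟩
  have h := pds_castAdd a.2 b.2 ⟨i, hi⟩
  exact (congrArg Fin.val h).trans_lt (a.2 _).2

/-- The one-line notation of `x`, with positions counted from `0` and extended by the identity to
all of `ℕ`, so that permutations of different lengths can be compared without casts. -/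
noncomputable def value (x : PermPt) (i : ℕ) : ℕ :=
  if h : i < x.1 then x.2 ⟨i, h⟩ else i

lemma value_coe (x : PermPt) (i : Fin x.1) : value x i = x.2 i := dif_pos i.2

lemma value_lt {i : ℕ} (hi : i < x.1) : value x i < x.1 := by
  simp [value, hi]

lemma ext_value (h : x.1 = y.1) (hv : ∀ i < x.1, value x i = value y i) : x = y := by
  obtain ⟨n, π⟩ := x
  obtain ⟨_, ρ⟩ := y
  obtain rfl : n = _ := h
  congr
  ext i
  simpa only [value_coe] using hv i i.2

lemma value_pdsP (a b : PermPt) (i : ℕ) :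
    value (pdsP a b) i = if i < a.1 then value a i else a.1 + value b (i - a.1) := by
  by_cases hi : i < a.1 + b.1
  · lift i to Fin (a.1 + b.1) using hi
    rw [show value (pdsP a b) i = pds a.2 b.2 i from value_coe (pdsP a b) i]
    induction i using Fin.addCases with
    | left i => simp [value]
    | right j => simp [value]
  · have hval : value (pdsP a b) i = i := dif_neg hi
    have hvalb : value b (i - a.1) = i - a.1 := dif_neg (by omega)
    rw [hval, hvalb, if_neg (by omega)]
    omega

lemma pdsP_pempty (x : PermPt) : pdsP x pempty = x :=
  ext_value rfl fun i hi => by rw [value_pdsP, if_pos (by exact hi)]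

lemma pempty_pdsP (x : PermPt) : pdsP pempty x = x :=
  ext_value (Nat.zero_add _) fun i _ => by simp [value_pdsP, pempty]

lemma pdsP_assoc (x y z : PermPt) : pdsP (pdsP x y) z = pdsP x (pdsP y z) := by
  refine ext_value (Nat.add_assoc _ _ _) fun i _ => ?_
  simp only [value_pdsP, pdsP_fst, Nat.sub_add_eq]
  split_ifs <;> omega

lemma pdsP_cancel (h : pdsP a x = pdsP b y) (hab : a.1 = b.1) : a = b ∧ x = y := by
  have hlen : a.1 + x.1 = b.1 + y.1 := congrArg Sigma.fst h
  have hval (i : ℕ) : value (pdsP a x) i = value (pdsP b y) i := by rw [h]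
  simp only [value_pdsP] at hval
  refine ⟨ext_value hab fun i hi => ?_, ext_value (by omega) fun i _ => ?_⟩
  · simpa only [hi, hab ▸ hi, if_true] using hval i
  · simpa [hab] using hval (a.1 + i)

lemma exists_eq_pdsP_of_pdsP_eq (h : pdsP a x = pdsP b y) (hab : a.1 ≤ b.1) :
    ∃ c, b = pdsP a c ∧ x = pdsP c y := by
  have hb (i : Fin b.1) (hi : (i : ℕ) < a.1) : (b.2 i : ℕ) < a.1 := by
    have hval : value (pdsP a x) i = value (pdsP b y) i := by rw [h]
    rw [value_pdsP, value_pdsP, if_pos hi, if_pos i.2, value_coe] at hval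
    exact hval ▸ value_lt hi
  obtain ⟨a', c, ha', rfl⟩ := exists_eq_pdsP hab hb
  rw [pdsP_assoc] at h
  obtain ⟨rfl, rfl⟩ := pdsP_cancel h ha'.symm
  exact ⟨c, rfl, rfl⟩

lemma eq_pempty (hx : x.1 = 0) : x = pempty :=
  ext_value hx fun i hi => by omega

lemma psum_append (l l' : List PermPt) : psum (l ++ l') = pdsP (psum l) (psum l') := by
  induction l with
  | nil => exact (pempty_pdsP _).symm
  | cons a l ih => exact (congrArg (pdsP a) ih).trans (pdsP_assoc _ _ _).symm

lemma ple_refl (x : PermPt) : ple x x := ⟨id, strictMono_id, fun _ _ => Iff.rfl⟩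

lemma ple_trans : ple x y → ple y z → ple x z := by
  rintro ⟨f, hf, hxy⟩ ⟨g, hg, hyz⟩
  exact ⟨g ∘ f, hg.comp hf, fun i j => (hxy i j).trans (hyz _ _)⟩

lemma ple_length_le : ple x y → x.1 ≤ y.1 := by
  rintro ⟨f, hf, -⟩
  simpa using Fintype.card_le_of_injective f hf.injective

lemma eq_of_ple_of_length_le (h : ple x y) (hyx : y.1 ≤ x.1) : x = y := by
  have hxy := le_antisymm (ple_length_le h) hyx
  obtain ⟨n, π⟩ := x
  obtain ⟨_, ρ⟩ := y
  obtain rfl : n = _ := hxy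
  obtain ⟨f, hf, hfπ⟩ := h
  obtain rfl : f = id := hf.eq_id
  have hmono : StrictMono (ρ ∘ π.symm) := fun i j hij =>
    lt_of_not_ge fun hji => hij.not_ge (by simpa using (hfπ (π.symm j) (π.symm i)).2 hji)
  congr
  ext i
  simpa using congrArg Fin.val (congrFun hmono.eq_id (π i)).symm

lemma ple_antisymm (hxy : ple x y) (hyx : ple y x) : x = y :=
  eq_of_ple_of_length_le hxy (ple_length_le hyx)

lemma finite_setOf_ple (z : PermPt) : {y | ple y z}.Finite := by
  refine ((Finset.range (z.1 + 1)).sigma fun _ => Finset.univ).finite_toSet.subset fun y hy => ?_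
  simpa using Nat.lt_succ_of_le (ple_length_le hy)

lemma pempty_ple (x : PermPt) : ple pempty x :=
  ⟨Fin.elim0, fun i => i.elim0, fun i => i.elim0⟩

lemma pone_ple (hx : 0 < x.1) : ple pone x :=
  ⟨fun _ => ⟨0, hx⟩, Subsingleton.strictMono (α := Fin 1) _,
    fun i j => by simp [Subsingleton.elim (α := Fin 1) i j]⟩

lemma castAdd_lt_natAdd (i : Fin m) (j : Fin n) : Fin.castAdd n i < Fin.natAdd m j :=
  Fin.lt_def.2 (i.2.trans_le (Nat.le_add_right m j))

lemma castAdd_lt_castAdd_iff {i j : Fin m} : Fin.castAdd n i < Fin.castAdd n j ↔ i < j := Iff.rfl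

lemma castAdd_le_castAdd_iff {i j : Fin m} : Fin.castAdd n i ≤ Fin.castAdd n j ↔ i ≤ j := Iff.rfl

lemma ple_pdsP (hac : ple a c) (hbd : ple b d) : ple (pdsP a b) (pdsP c d) := by
  obtain ⟨f, hf, hfv⟩ := hac
  obtain ⟨g, hg, hgv⟩ := hbd
  let F : Fin (a.1 + b.1) → Fin (c.1 + d.1) :=
    Fin.addCases (fun i => Fin.castAdd d.1 (f i)) (fun j => Fin.natAdd c.1 (g j))
  have hF : StrictMono F := by
    intro i j hij
    induction i using Fin.addCases <;> induction j using Fin.addCases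
    · simpa [F, castAdd_lt_castAdd_iff] using hf hij
    · simpa [F] using castAdd_lt_natAdd _ _
    · exact absurd hij (castAdd_lt_natAdd _ _).not_gt
    · simpa [F] using hg ((Fin.natAdd_lt_natAdd_iff _).1 hij)
  have hFv (i j : Fin (a.1 + b.1)) :
      pds a.2 b.2 i ≤ pds a.2 b.2 j ↔ pds c.2 d.2 (F i) ≤ pds c.2 d.2 (F j) := by
    induction i using Fin.addCases <;> induction j using Fin.addCases
    · simpa [F, castAdd_le_castAdd_iff] using hfv _ _
    · simp [F, (castAdd_lt_natAdd _ _).le]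
    · simp [F, (castAdd_lt_natAdd _ _).not_ge]
    · simpa [F] using hgv _ _
  exact ⟨F, hF, hFv⟩

lemma castAdd_apply_lt_of_forall_lt {π : Equiv.Perm (Fin (m + n))}
    (hπ : ∀ i j, π (Fin.castAdd n i) < π (Fin.natAdd m j)) (i : Fin m) :
    (π (Fin.castAdd n i) : ℕ) < m := by
  have hsub : Finset.univ.map ((Fin.natAddEmb m).trans π.toEmbedding) ⊆
      Finset.Ioi (π (Fin.castAdd n i)) := by
    intro k hk
    obtain ⟨j, -, rfl⟩ := Finset.mem_map.1 hk
    exact Finset.mem_Ioi.2 (hπ i j)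
  have hcard := Finset.card_le_card hsub
  rw [Finset.card_map, Finset.card_univ, Fintype.card_fin, Fin.card_Ioi] at hcard
  omega

lemma exists_forall_lt_iff_of_monotone {N : ℕ} {f : Fin N → ℕ} (hf : Monotone f) (r : ℕ) :
    ∃ m ≤ N, ∀ i : Fin N, (i : ℕ) < m ↔ f i < r := by
  by_cases h : ∃ i, r ≤ f i
  · obtain ⟨i, hi, hmin⟩ := wellFounded_lt.has_min {i | r ≤ f i} h
    exact ⟨i, i.2.le, fun j => ⟨fun hj => not_le.1 fun hr => hmin j hr hj,
      fun hj => not_le.1 fun hij => hj.not_ge (hi.trans (hf hij))⟩⟩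
  · push Not at h
    exact ⟨N, le_rfl, fun i => iff_of_true i.2 (h i)⟩

lemma exists_eq_pdsP_of_ple_pdsP (h : ple x (pdsP c d)) :
    ∃ a b, x = pdsP a b ∧ ple a c ∧ ple b d := by
  obtain ⟨N, π⟩ := x
  obtain ⟨f, hf, hfv⟩ : ∃ f : Fin N → Fin (c.1 + d.1), StrictMono f ∧
    ∀ i j, π i ≤ π j ↔ pds c.2 d.2 (f i) ≤ pds c.2 d.2 (f j) := h
  obtain ⟨m, hm, hmf⟩ := exists_forall_lt_iff_of_monotone (f := fun i => (f i : ℕ)) hf.monotone c.1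
  obtain ⟨n, rfl⟩ := Nat.exists_eq_add_of_le hm
  have hleft (i : Fin m) : ∃ k, f (Fin.castAdd n i) = Fin.castAdd d.1 k :=
    ⟨⟨_, (hmf _).1 i.2⟩, rfl⟩
  have hright (j : Fin n) : ∃ k, f (Fin.natAdd m j) = Fin.natAdd c.1 k := by
    have hj : c.1 ≤ f (Fin.natAdd m j) := not_lt.1 ((hmf _).not.1 (by simp))
    exact ⟨Fin.subNat c.1 (Fin.cast (Nat.add_comm _ _) (f (Fin.natAdd m j))) hj, by simp⟩
  choose g hg using hleft
  choose g' hg' using hright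
  have hπ (i : Fin m) (j : Fin n) : π (Fin.castAdd n i) < π (Fin.natAdd m j) := by
    rw [← not_le, hfv, hg, hg', pds_castAdd, pds_natAdd, not_le]
    exact castAdd_lt_natAdd _ _
  obtain ⟨α, β, rfl⟩ := exists_eq_pds (castAdd_apply_lt_of_forall_lt hπ)
  refine ⟨⟨m, α⟩, ⟨n, β⟩, rfl, ⟨g, fun i j hij => ?_, fun i j => ?_⟩,
    ⟨g', fun i j hij => ?_, fun i j => ?_⟩⟩
  · simpa [hg, castAdd_lt_castAdd_iff] using @hf (Fin.castAdd n i) (Fin.castAdd n j) hij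
  · simpa [hg, castAdd_le_castAdd_iff] using hfv (Fin.castAdd n i) (Fin.castAdd n j)
  · simpa [hg'] using @hf (Fin.natAdd m i) (Fin.natAdd m j) (by simpa using hij)
  · simpa [hg'] using hfv (Fin.natAdd m i) (Fin.natAdd m j)

end PermPt

/-! ### Patterns as words -/

namespace PermPt

variable {a b x y : PermPt}

/-- The indecomposable patterns, as an alphabet over which patterns are words. -/
abbrev Indecomposable : Type := {p : PermPt // 0 < p.1 ∧ ¬ Decomp p.2}

/-- The direct sum of the letters of a word. This identifies words in indecomposable patterns with
patterns, the letters being the components of the finest decomposition. -/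
def wordSum (w : FreeMonoid Indecomposable) : PermPt := psum (w.toList.map Subtype.val)

lemma wordSum_of (a : Indecomposable) : wordSum (of a) = a := pdsP_pempty a

lemma wordSum_mul (u v : FreeMonoid Indecomposable) :
    wordSum (u * v) = pdsP (wordSum u) (wordSum v) := by
  rw [wordSum, toList_mul, List.map_append, psum_append]
  rfl

lemma Indecomposable.length_le_of_pdsP_eq {a b : Indecomposable} (h : pdsP a x = pdsP b y) :
    b.1.1 ≤ a.1.1 := by
  by_contra! hab
  obtain ⟨c, hc, -⟩ := exists_eq_pdsP_of_pdsP_eq h hab.le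
  have hc_pos : 0 < c.1 := by
    rw [hc, pdsP_fst] at hab
    omega
  apply b.2.2
  rw [hc]
  exact decomp_pdsP a.2.1 hc_pos

lemma wordSum_fst_pos {w : FreeMonoid Indecomposable} (hw : w ≠ 1) : 0 < (wordSum w).1 := by
  induction w using FreeMonoid.casesOn with
  | one => exact absurd rfl hw
  | of_mul a w => exact Nat.add_pos_left a.2.1 _

lemma wordSum_injective : Function.Injective wordSum := by
  intro u v h
  induction u using FreeMonoid.inductionOn' generalizing v with
  | one =>
    by_contra hv
    exact (wordSum_fst_pos (Ne.symm hv)).ne (congrArg Sigma.fst h)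
  | of_mul a u ih =>
    induction v using FreeMonoid.casesOn with
    | one => exact absurd (congrArg Sigma.fst h) (wordSum_fst_pos (by simp)).ne'
    | of_mul b v =>
      obtain ⟨hab, huv⟩ := pdsP_cancel h (le_antisymm
        (Indecomposable.length_le_of_pdsP_eq h.symm) (Indecomposable.length_le_of_pdsP_eq h))
      rw [Subtype.ext hab, ih huv]

lemma wordSum_surjective : Function.Surjective wordSum := by
  intro x
  induction hn : x.1 using Nat.strong_induction_on generalizing x with
  | h n ih =>
    subst hn
    by_cases hx : Decomp x.2
    · obtain ⟨a, b, ha, hb, rfl⟩ := exists_eq_pdsP_of_decomp hx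
      obtain ⟨u, rfl⟩ := ih _ ha _ rfl
      obtain ⟨v, rfl⟩ := ih _ hb _ rfl
      exact ⟨u * v, wordSum_mul u v⟩
    · obtain hx0 | hx0 := Nat.eq_zero_or_pos x.1
      · exact ⟨1, (eq_pempty hx0).symm⟩
      · exact ⟨of ⟨x, hx0, hx⟩, wordSum_of _⟩

instance : PartialOrder (FreeMonoid Indecomposable) where
  le u v := ple (wordSum u) (wordSum v)
  le_refl u := ple_refl (wordSum u)
  le_trans _ _ _ := ple_trans
  le_antisymm _ _ huv hvu := wordSum_injective (ple_antisymm huv hvu)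

noncomputable instance : LocallyFiniteOrder (FreeMonoid Indecomposable) :=
  .ofFiniteIcc fun _ v => ((finite_setOf_ple (wordSum v)).preimage
    wordSum_injective.injOn).subset fun _ hw => hw.2

instance : IsConcatOrder Indecomposable where
  one_le w := pempty_ple (wordSum w)
  le_mul_iff {w x y} := by
    change ple _ _ ↔ _
    rw [wordSum_mul]
    constructor
    · intro h
      obtain ⟨a, b, hw, ha, hb⟩ := exists_eq_pdsP_of_ple_pdsP h
      obtain ⟨u, rfl⟩ := wordSum_surjective a
      obtain ⟨v, rfl⟩ := wordSum_surjective b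
      exact ⟨u, v, wordSum_injective (hw.trans (wordSum_mul u v).symm), ha, hb⟩
    · rintro ⟨u, v, rfl, hu, hv⟩
      rw [wordSum_mul]
      exact ple_pdsP hu hv

lemma mu_wordSum {mu : PermPt → PermPt → ℤ} (hmu : IsMobius mu)
    (u v : FreeMonoid Indecomposable) :
    mu (wordSum u) (wordSum v) = IncidenceAlgebra.mu ℤ u v := by
  obtain ⟨hself, hzero, hsum⟩ := hmu
  let f : IncidenceAlgebra ℤ (FreeMonoid Indecomposable) :=
    ⟨fun u v => mu (wordSum u) (wordSum v), fun u v => hzero (wordSum u) (wordSum v)⟩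
  suffices f = IncidenceAlgebra.mu ℤ from congrArg (fun g => g u v) this
  refine eq_mu_of_sum_Icc fun u v huv => ?_
  split_ifs with h
  · subst h
    rw [Icc_self, sum_singleton]
    exact hself (wordSum u)
  · have himage : {y | ple (wordSum u) y ∧ ple y (wordSum v)} = wordSum '' Set.Icc u v :=
      (Set.image_preimage_eq _ wordSum_surjective).symm
    rw [← hsum _ _ huv (wordSum_injective.ne h), himage,
      finsum_mem_image wordSum_injective.injOn, ← Finset.coe_Icc, finsum_mem_coe_finset]
    rfl

lemma mu_one_of {R : Type*} [Ring R] {a : Indecomposable} (ha : 1 < a.1.1) :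
    IncidenceAlgebra.mu R 1 (of a) = 0 := by
  have hpone : ¬ Decomp pone.2 := fun ⟨m, hm0, hm1, _⟩ => hm0.ne' (Nat.lt_one_iff.1 hm1)
  let e : Indecomposable := ⟨pone, Nat.one_pos, hpone⟩
  have he {w : FreeMonoid Indecomposable} (hw : w ≠ 1) : of e ≤ w := by
    change ple (wordSum (of e)) (wordSum w)
    rw [wordSum_of]
    exact pone_ple (wordSum_fst_pos hw)
  have hea : of e ≠ of a := fun h => ha.ne (congrArg (fun b => b.1.1) (of_injective h))
  exact mu_eq_zero_of_forall_le ((IsConcatOrder.one_le _).lt_of_ne (one_ne_of e))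
    ((he (of_ne_one a)).lt_of_ne hea) fun y hy _ => he hy.ne'

theorem mu_wordSum_ofList {mu : PermPt → PermPt → ℤ} (hmu : IsMobius mu)
    (l l' : List Indecomposable) {a : Indecomposable} (ha : 1 < a.1.1) {k : ℕ} (hk : 1 ≤ k)
    (hlt : ∀ i < k, l'[i]? = some a) (hne : l'[k]? ≠ some a) :
    mu (wordSum (ofList l)) (wordSum (ofList l')) =
      ∑ i ∈ Icc 1 l.length, ∑ j ∈ Icc 1 k,
        mu (wordSum (ofList (l.take i))) a *
          mu (wordSum (ofList (l.drop i))) (wordSum (ofList (l'.drop j))) := by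
  have hword := ofList_drop_eq_of_pow_mul hlt (Nat.zero_le k)
  rw [List.drop_zero, Nat.sub_zero] at hword
  rw [mu_wordSum hmu, hword, IsConcatOrder.mu_of_pow_mul ℤ (mu_one_of ha) (by simpa using hne) hk]
  refine sum_congr rfl fun i _ => sum_congr rfl fun j hj => ?_
  rw [← wordSum_of, mu_wordSum hmu, mu_wordSum hmu,
    ofList_drop_eq_of_pow_mul hlt (mem_Icc.1 hj).2]

end PermPt

end

/-- Proposition 2 of Burstein–Jelínek–Jelínková–Steingrímsson: if the finest
decomposition of `τ` has `t ≥ 2` components with `|τ₁| > 1`, and `k` is the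
number of leading components equal to `τ₁`, then
`μ(σ,τ) = Σ_{i=1}^{s} Σ_{j=1}^{k} μ(σ_{≤i}, τ₁) · μ(σ_{>i}, τ_{>j})`. -/
theorem mobius_tau_first_long (mu : PermPt → PermPt → ℤ) (hmu : IsMobius mu)
    (s t : ℕ) (hs : 1 ≤ s) (ht : 2 ≤ t)
    (σf : Fin s → PermPt) (τf : Fin t → PermPt)
    (hσcomp : ∀ m : Fin s, 0 < (σf m).1 ∧ ¬ Decomp (σf m).2)
    (hτcomp : ∀ m : Fin t, 0 < (τf m).1 ∧ ¬ Decomp (τf m).2)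
    (σ τ : PermPt)
    (hσ : σ = psum (List.ofFn σf)) (hτ : τ = psum (List.ofFn τf))
    (hτ1 : 1 < (τf ⟨0, by omega⟩).1)
    (k : ℕ) (hk1 : 1 ≤ k) (hk2 : k ≤ t)
    (hk3 : ∀ i : Fin t, (i : ℕ) < k → τf i = τf ⟨0, by omega⟩)
    (hk4 : ∀ h : k < t, τf ⟨k, h⟩ ≠ τf ⟨0, by omega⟩) :
    mu σ τ =
      ∑ i ∈ Finset.Icc 1 s, ∑ j ∈ Finset.Icc 1 k,
        mu (psum ((List.ofFn σf).take i)) (τf ⟨0, by omega⟩) *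
          mu (psum ((List.ofFn σf).drop i)) (psum ((List.ofFn τf).drop j)) := by
  subst hσ hτ
  lift σf to Fin s → PermPt.Indecomposable using hσcomp
  lift τf to Fin t → PermPt.Indecomposable using hτcomp
  have hlt (i : ℕ) (hi : i < k) : (List.ofFn τf)[i]? = some (τf ⟨0, by omega⟩) := by
    simpa [hi.trans_le hk2] using Subtype.ext (hk3 ⟨i, hi.trans_le hk2⟩ hi)
  have hne : (List.ofFn τf)[k]? ≠ some (τf ⟨0, by omega⟩) := by
    simpa [Subtype.ext_iff] using hk4
  have h := PermPt.mu_wordSum_ofList hmu (List.ofFn σf) (List.ofFn τf) hτ1 hk1 hlt hne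
  simpa [PermPt.wordSum, List.map_take, List.map_drop, List.map_ofFn, Function.comp_def] using h
end
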